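/- For every constant C > 0 and every θ ∈ (0,1/4) there exist a constant C' > 0 and a time t₀ ≥ 1 such that the following holds. For all t ≥ t₀, all x ≥ 0 and all ξ = (ξ₁,ξ₂,ξ₃) ∈ ℝ³ with x − t(ξ₁+u) ≥ 0, ∫₀^{t} e^{−ν(ξ)(t−s)} · ( ∫_{ℝ³} e^{−θ|ξ'|²} ( ∫_{ℝ³} e^{−C|ξ'−ξ''|²}/|ξ'−ξ''| · α(x−(ξ₁+u)(t−s), ξ'')⁻¹ dξ'' ) dξ' ) ds ≤ C' · t / α(x,ξ). -/

import Mathlib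

open MeasureTheory

noncomputable section

/-- The kinetic weight `α̃(x,ξ) = √((ξ₁+u)² + (cν₀)² x²)`. -/
def alphaTilde (u c ν₀ : ℝ) (x : ℝ) (ξ : EuclideanSpace ℝ (Fin 3)) : ℝ :=
  Real.sqrt ((ξ 0 + u) ^ 2 + (c * ν₀) ^ 2 * x ^ 2)


def qf (w : ℝ) : ℝ := (Real.sqrt |w|)⁻¹

def hh (w : ℝ) : ℝ := (Set.Icc (-1:ℝ) 1).indicator qf w

def gg (C w : ℝ) : ℝ := Real.exp (-C * w ^ 2)

lemma qf_nonneg (w : ℝ) : 0 ≤ qf w := by unfold qf; positivity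

lemma gg_nonneg (C w : ℝ) : 0 ≤ gg C w := (Real.exp_pos _).le

lemma gg_le_one {C : ℝ} (hC : 0 < C) (w : ℝ) : gg C w ≤ 1 := by
  unfold gg; rw [Real.exp_le_one_iff]; nlinarith [sq_nonneg w, mul_nonneg hC.le (sq_nonneg w)]

lemma hh_nonneg (w : ℝ) : 0 ≤ hh w := Set.indicator_nonneg (fun x _ => qf_nonneg x) w

lemma qf_mul (a b : ℝ) : qf (a * b) = qf a * qf b := by
  unfold qf; rw [abs_mul, Real.sqrt_mul (abs_nonneg _), mul_inv]

lemma qf_neg (a : ℝ) : qf (-a) = qf a := by unfold qf; rw [abs_neg]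

lemma qf_intervalIntegrable (t : ℝ) (ht : 0 ≤ t) : IntervalIntegrable qf volume 0 t := by
  have h := intervalIntegral.intervalIntegrable_rpow' (a := 0) (b := t) (r := -(1/2)) (by norm_num)
  refine h.congr ?_
  intro x hx
  rw [Set.uIoc_of_le ht] at hx
  simp only [qf]
  rw [abs_of_pos hx.1, Real.rpow_neg hx.1.le, Real.sqrt_eq_rpow]

lemma qf_integral (t : ℝ) (ht : 0 ≤ t) : ∫ s in (0:ℝ)..t, qf s = 2 * Real.sqrt t := by
  have : ∫ s in (0:ℝ)..t, qf s = ∫ s in (0:ℝ)..t, s ^ (-(1/2):ℝ) := by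
    apply intervalIntegral.integral_congr_ae
    refine Filter.Eventually.of_forall ?_
    intro x hx
    rw [Set.uIoc_of_le ht] at hx
    simp only [qf]
    rw [abs_of_pos hx.1, Real.rpow_neg hx.1.le, Real.sqrt_eq_rpow]
  rw [this, integral_rpow (Or.inl (by norm_num))]
  rw [Real.sqrt_eq_rpow]
  norm_num
  ring

lemma hh_integrable : Integrable hh := by
  have h1 := qf_intervalIntegrable 1 zero_le_one
  have h2 : IntervalIntegrable qf volume (-1) 0 := by
    have := (IntervalIntegrable.iff_comp_neg (f := qf) (a := 0) (b := 1)).1 h1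
    simp only [qf_neg, neg_zero] at this
    exact this.symm
  have h3 := h2.trans h1
  rw [intervalIntegrable_iff_integrableOn_Icc_of_le (by norm_num)] at h3
  exact (integrable_indicator_iff measurableSet_Icc).2 h3

lemma gg_integrable {C : ℝ} (hC : 0 < C) : Integrable (gg C) := integrable_exp_neg_mul_sq hC

lemma gg_mul_qf {C : ℝ} (hC : 0 < C) (w p : ℝ) : gg C w * qf p ≤ hh p + gg C w := by
  by_cases hp : p ∈ Set.Icc (-1:ℝ) 1
  · have : hh p = qf p := Set.indicator_of_mem hp _
    rw [this]
    nlinarith [gg_nonneg C w, gg_le_one hC w, qf_nonneg p,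
      mul_nonneg (sub_nonneg.2 (gg_le_one hC w)) (qf_nonneg p)]
  · have h1 : 1 ≤ |p| := by
      by_contra h
      exact hp (abs_le.1 (not_le.1 h).le)
    have h2 : qf p ≤ 1 := by
      unfold qf
      exact inv_le_one_of_one_le₀ (Real.one_le_sqrt.2 h1)
    nlinarith [gg_nonneg C w, hh_nonneg p, mul_nonneg (gg_nonneg C w) (sub_nonneg.2 h2)]

lemma ker_bound {C : ℝ} (a b c : ℝ) (hb : b ≠ 0) (hc : c ≠ 0) :
    Real.exp (-C * (a^2+b^2+c^2)) / Real.sqrt (a^2+b^2+c^2) ≤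
      gg C a * (gg C b * qf b) * (gg C c * qf c) := by
  have e : Real.exp (-C * (a^2+b^2+c^2)) = gg C a * gg C b * gg C c := by
    unfold gg; rw [← Real.exp_add, ← Real.exp_add]; ring_nf
  have hs : (Real.sqrt (a^2+b^2+c^2))⁻¹ ≤ qf b * qf c := by
    rw [← qf_mul]
    unfold qf
    have : 0 < |b * c| := by positivity
    apply inv_anti₀ (by positivity)
    apply Real.sqrt_le_sqrt
    rw [abs_le]
    constructor <;> nlinarith [sq_nonneg a, sq_nonneg (b+c), sq_nonneg (b-c), sq_nonneg b, sq_nonneg c]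
  rw [e, div_eq_mul_inv]
  calc _ ≤ gg C a * gg C b * gg C c * (qf b * qf c) := by
        gcongr
        exact mul_nonneg (mul_nonneg (gg_nonneg _ _) (gg_nonneg _ _)) (gg_nonneg _ _)
    _ = _ := by ring

lemma chi_facts (χ χ' : ℝ → ℝ)
    (hderiv : ∀ s ≥ (0:ℝ), HasDerivAt χ (χ' s) s)
    (hmono : ∀ s ≥ (0:ℝ), 0 ≤ χ' s)
    (hid : ∀ s : ℝ, 0 ≤ s → s ≤ 1/2 → χ s = s)
    (hone : ∀ s : ℝ, 2 ≤ s → χ s = 1) :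
    (∀ s ≥ 0, 0 ≤ χ s) ∧ (∀ s > 0, 0 < χ s) ∧ (∀ s ≥ 0, χ s ≤ 1) ∧ (∀ s ≥ 0, χ s ≤ 2 * s) ∧
      (∀ s > 0, (χ s)⁻¹ ≤ 2 + s⁻¹) := by
  have hm : MonotoneOn χ (Set.Ici 0) := by
    apply monotoneOn_of_deriv_nonneg (convex_Ici 0)
    · exact fun s hs => (hderiv s hs).continuousAt.continuousWithinAt
    · intro s hs
      rw [interior_Ici] at hs
      exact (hderiv s (le_of_lt hs)).differentiableAt.differentiableWithinAt
    · intro s hs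
      rw [interior_Ici] at hs
      rw [(hderiv s (le_of_lt hs)).deriv]
      exact hmono s (le_of_lt hs)
  have h12 : χ (1/2) = 1/2 := hid _ (by norm_num) le_rfl
  have hbig : ∀ s : ℝ, 1/2 ≤ s → 1/2 ≤ χ s := by
    intro s hs
    rw [← h12]
    exact hm (by simp) (by simp only [Set.mem_Ici]; linarith) (by linarith)
  have hle : ∀ s ≥ 0, χ s ≤ 1 := by
    intro s hs
    rw [← hone (max s 2) (le_max_right _ _)]
    exact hm hs (le_trans hs (le_max_left _ _)) (le_max_left _ _)
  refine ⟨?_, ?_, hle, ?_, ?_⟩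
  · intro s hs
    rcases le_total s (1/2) with h | h
    · rw [hid s hs h]; exact hs
    · linarith [hbig s h]
  · intro s hs
    rcases le_total s (1/2) with h | h
    · rw [hid s hs.le h]; exact hs
    · linarith [hbig s h]
  · intro s hs
    rcases le_total s (1/2) with h | h
    · rw [hid s hs h]; linarith
    · linarith [hle s hs]
  · intro s hs
    rcases le_total s (1/2) with h | h
    · rw [hid s hs.le h]; linarith
    · have := inv_anti₀ (by norm_num) (hbig s h)
      have h2 : 0 < s⁻¹ := by positivity
      norm_num at this ⊢
      linarith

lemma alpha_bound (u k' ν₀ y : ℝ) (ξ : EuclideanSpace ℝ (Fin 3)) (hk : 0 < k' * ν₀) (hy : 0 < y)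
    (hw : ξ 0 + u ≠ 0) :
    0 < alphaTilde u k' ν₀ y ξ ∧
    (alphaTilde u k' ν₀ y ξ)⁻¹ ≤ qf (k' * ν₀ * y) * qf (ξ 0 + u) := by
  have h0 : 0 < |k' * ν₀ * y * (ξ 0 + u)| := by
    rw [abs_pos]; exact mul_ne_zero (by positivity) hw
  have h1 : Real.sqrt |k' * ν₀ * y * (ξ 0 + u)| ≤ alphaTilde u k' ν₀ y ξ := by
    unfold alphaTilde
    apply Real.sqrt_le_sqrt
    set b := k' * ν₀ * y
    have : (k' * ν₀)^2 * y^2 = b^2 := by simp only [b]; ring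
    rw [this, abs_le]
    constructor <;> nlinarith [sq_nonneg (b+(ξ 0 + u)), sq_nonneg (b-(ξ 0 + u)), sq_nonneg b, sq_nonneg (ξ 0 + u)]
  have h2 := Real.sqrt_pos.2 h0
  refine ⟨h2.trans_le h1, ?_⟩
  rw [← qf_mul]
  exact inv_anti₀ h2 h1

lemma norm3 (a b : EuclideanSpace ℝ (Fin 3)) :
    ‖a - b‖ = Real.sqrt ((a 0 - b 0)^2 + (a 1 - b 1)^2 + (a 2 - b 2)^2) := by
  rw [EuclideanSpace.norm_eq]
  simp [Fin.sum_univ_three]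

/-- Uniform bound for the innermost integral. -/
lemma J_bound {C : ℝ} (hC : 0 < C) (u : ℝ) (Q : ℝ) (hQ : 0 ≤ Q) (ξ' : EuclideanSpace ℝ (Fin 3))
    (A : EuclideanSpace ℝ (Fin 3) → ℝ) (hA0 : ∀ ξ, 0 ≤ A ξ)
    (hA : ∀ ξ : EuclideanSpace ℝ (Fin 3), ξ 0 + u ≠ 0 → A ξ ≤ 2 + Q * qf (ξ 0 + u)) :
    ∫ ξ'' : EuclideanSpace ℝ (Fin 3), Real.exp (-C * ‖ξ' - ξ''‖ ^ 2) / ‖ξ' - ξ''‖ * A ξ'' ≤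
      2 * ((∫ w, hh w) + ∫ w, gg C w) ^ 3 * (1 + Q) := by
  set H := ∫ w, hh w with hH
  set G := ∫ w, gg C w with hG
  have hH0 : 0 ≤ H := integral_nonneg hh_nonneg
  have hG0 : 0 ≤ G := integral_nonneg (gg_nonneg C)
  let f : Fin 3 → ℝ → ℝ := ![fun w => 2 * gg C (ξ' 0 - w) + Q * (hh (w + u) + gg C (ξ' 0 - w)),
    fun w => hh (ξ' 1 - w) + gg C (ξ' 1 - w), fun w => hh (ξ' 2 - w) + gg C (ξ' 2 - w)]
  have ig : ∀ a, Integrable (fun w => gg C (a - w)) := fun a => (gg_integrable hC).comp_sub_left a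
  have ih : ∀ a, Integrable (fun w => hh (a - w)) := fun a => hh_integrable.comp_sub_left a
  have ih' : Integrable (fun w => hh (w + u)) := hh_integrable.comp_add_right u
  have eg : ∀ a, ∫ w, gg C (a - w) = G := fun a => integral_sub_left_eq_self (gg C) volume a
  have eh : ∀ a, ∫ w, hh (a - w) = H := fun a => integral_sub_left_eq_self hh volume a
  have eh' : ∫ w, hh (w + u) = H := integral_add_right_eq_self hh u
  have hf : ∀ i, Integrable (f i) := by
    intro i
    fin_cases i
    · exact ((ig _).const_mul 2).add ((ih'.add (ig _)).const_mul Q)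
    · exact (ih _).add (ig _)
    · exact (ih _).add (ig _)
  have hint : Integrable (fun x : Fin 3 → ℝ => ∏ i, f i (x i)) := Integrable.fintype_prod hf
  have mp := PiLp.volume_preserving_toLp (Fin 3)
  have me : MeasurableEmbedding (@WithLp.toLp 2 (Fin 3 → ℝ)) :=
    (MeasurableEquiv.toLp 2 (Fin 3 → ℝ)).measurableEmbedding
  rw [← mp.integral_comp me]
  have hval : ∫ x : Fin 3 → ℝ, ∏ i, f i (x i) = (2 * G + Q * (H + G)) * (H + G) * (H + G) := by
    rw [integral_fintype_prod_volume_eq_prod, Fin.prod_univ_three]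
    have e0 : ∫ x, f 0 x = 2 * G + Q * (H + G) := by
      change ∫ w, (2 * gg C (ξ' 0 - w) + Q * (hh (w + u) + gg C (ξ' 0 - w))) = _
      have i2 : Integrable (fun w => Q * (hh (w + u) + gg C (ξ' 0 - w))) :=
        (ih'.add (ig _)).const_mul Q
      rw [integral_add ((ig _).const_mul 2) i2, integral_const_mul,
        integral_const_mul, integral_add ih' (ig _), eg, eh']
    have e1 : ∫ x, f 1 x = H + G := by
      change ∫ w, (hh (ξ' 1 - w) + gg C (ξ' 1 - w)) = _
      rw [integral_add (ih _) (ig _), eg, eh]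
    have e2 : ∫ x, f 2 x = H + G := by
      change ∫ w, (hh (ξ' 2 - w) + gg C (ξ' 2 - w)) = _
      rw [integral_add (ih _) (ig _), eg, eh]
    rw [e0, e1, e2]
  calc _ ≤ ∫ x : Fin 3 → ℝ, ∏ i, f i (x i) := by
        refine integral_mono_of_nonneg ?_ hint ?_
        · refine Filter.Eventually.of_forall fun x => ?_
          exact mul_nonneg (by positivity) (hA0 _)
        · have n0 : ∀ᵐ x : Fin 3 → ℝ, x 0 ≠ -u := Measure.ae_eval_ne (fun _ : Fin 3 => (volume : Measure ℝ)) 0 (-u)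
          have n1 : ∀ᵐ x : Fin 3 → ℝ, x 1 ≠ ξ' 1 := Measure.ae_eval_ne (fun _ : Fin 3 => (volume : Measure ℝ)) 1 _
          have n2 : ∀ᵐ x : Fin 3 → ℝ, x 2 ≠ ξ' 2 := Measure.ae_eval_ne (fun _ : Fin 3 => (volume : Measure ℝ)) 2 _
          filter_upwards [n0, n1, n2] with x h0 h1 h2
          rw [Fin.prod_univ_three]
          change Real.exp (-C * ‖ξ' - WithLp.toLp 2 x‖ ^ 2) / ‖ξ' - WithLp.toLp 2 x‖ * A (WithLp.toLp 2 x) ≤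
            (2 * gg C (ξ' 0 - x 0) + Q * (hh (x 0 + u) + gg C (ξ' 0 - x 0))) *
              (hh (ξ' 1 - x 1) + gg C (ξ' 1 - x 1)) * (hh (ξ' 2 - x 2) + gg C (ξ' 2 - x 2))
          rw [norm3]
          simp only []
          rw [Real.sq_sqrt (by positivity)]
          have k1 := ker_bound (C := C) (ξ' 0 - x 0) (ξ' 1 - x 1) (ξ' 2 - x 2)
            (sub_ne_zero.2 h1.symm) (sub_ne_zero.2 h2.symm)
          have k2 := hA (WithLp.toLp 2 x) (fun h => h0 (by simp at h; linarith))
          simp only [] at k2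
          have g0 := gg_nonneg C (ξ' 0 - x 0)
          have g1 := gg_nonneg C (ξ' 1 - x 1)
          have g2 := gg_nonneg C (ξ' 2 - x 2)
          have q1 := qf_nonneg (ξ' 1 - x 1)
          have q2 := qf_nonneg (ξ' 2 - x 2)
          have q0 := qf_nonneg (x 0 + u)
          have r0 := hh_nonneg (x 0 + u)
          have r1 := hh_nonneg (ξ' 1 - x 1)
          have r2 := hh_nonneg (ξ' 2 - x 2)
          have m0 := gg_mul_qf hC (ξ' 0 - x 0) (x 0 + u)
          have m1 := gg_mul_qf hC (ξ' 1 - x 1) (ξ' 1 - x 1)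
          have m2 := gg_mul_qf hC (ξ' 2 - x 2) (ξ' 2 - x 2)
          calc _ ≤ (gg C (ξ' 0 - x 0) * (gg C (ξ' 1 - x 1) * qf (ξ' 1 - x 1)) *
                  (gg C (ξ' 2 - x 2) * qf (ξ' 2 - x 2))) * (2 + Q * qf (x 0 + u)) :=
                mul_le_mul k1 k2 (hA0 _) (by positivity)
            _ = (2 * gg C (ξ' 0 - x 0) + Q * (gg C (ξ' 0 - x 0) * qf (x 0 + u))) *
                  (gg C (ξ' 1 - x 1) * qf (ξ' 1 - x 1)) * (gg C (ξ' 2 - x 2) * qf (ξ' 2 - x 2)) := by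
                ring
            _ ≤ _ := by gcongr
    _ = (2 * G + Q * (H + G)) * (H + G) * (H + G) := hval
    _ ≤ (2 * (H + G) + 2 * Q * (H + G)) * (H + G) * (H + G) := by
        gcongr
        · linarith
        · linarith
    _ = _ := by ring


lemma not_integrable_inner (C : ℝ) (u k' ν₀ : ℝ) (χ : ℝ → ℝ)
    (hid : ∀ s : ℝ, 0 ≤ s → s ≤ 1/2 → χ s = s) (ξ' : EuclideanSpace ℝ (Fin 3)) :
    ¬ Integrable (fun ξ'' : EuclideanSpace ℝ (Fin 3) =>
      Real.exp (-C * ‖ξ' - ξ''‖ ^ 2) / ‖ξ' - ξ''‖ * (χ (alphaTilde u k' ν₀ 0 ξ''))⁻¹) := by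
  intro hI
  have mp := PiLp.volume_preserving_toLp (Fin 3)
  have me : MeasurableEmbedding (@WithLp.toLp 2 (Fin 3 → ℝ)) :=
    (MeasurableEquiv.toLp 2 (Fin 3 → ℝ)).measurableEmbedding
  rw [← mp.integrable_comp_emb me] at hI
  have mp2 := (volume_preserving_piFinSuccAbove (fun _ : Fin 3 => ℝ) 0).symm
  rw [← mp2.integrable_comp_emb (MeasurableEquiv.measurableEmbedding _)] at hI
  have h1 := hI.prod_left_ae
  have h2 : ∀ᵐ y : Fin 2 → ℝ, y 0 ≠ ξ' 1 :=
    Measure.ae_eval_ne (fun _ : Fin 2 => (volume : Measure ℝ)) 0 _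
  obtain ⟨y, hy1, hy2⟩ := (h1.and h2).exists
  have hd : (0:ℝ) < (ξ' 1 - y 0)^2 + (ξ' 2 - y 1)^2 := by
    have : ξ' 1 - y 0 ≠ 0 := sub_ne_zero.2 hy2.symm
    positivity
  let D : ℝ → ℝ := fun w => (ξ' 0 - w)^2 + (ξ' 1 - y 0)^2 + (ξ' 2 - y 1)^2
  have hD : ∀ w, 0 < D w := fun w => by
    have := sq_nonneg (ξ' 0 - w)
    simp only [D]; linarith
  let g : ℝ → ℝ := fun w => Real.exp (-C * D w) / Real.sqrt (D w)
  have hgpos : ∀ w, 0 < g w := fun w => div_pos (Real.exp_pos _) (Real.sqrt_pos.2 (hD w))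
  have hgc : Continuous g := by
    have hDc : Continuous D := by fun_prop
    exact Continuous.div (by fun_prop) (by fun_prop) (fun w => (Real.sqrt_pos.2 (hD w)).ne')
  have hy3 : Integrable (fun w : ℝ => g w * (χ |w + u|)⁻¹) := by
    refine hy1.congr (Filter.Eventually.of_forall fun w => ?_)
    have e : WithLp.toLp 2 ((MeasurableEquiv.piFinSuccAbove (fun _ : Fin 3 => ℝ) 0).symm (w, y)) =
        (WithLp.toLp 2 ![w, y 0, y 1] : EuclideanSpace ℝ (Fin 3)) := by
      congr 1
      ext i
      fin_cases i <;> rfl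
    simp only [Function.comp]
    rw [e, norm3]
    simp only [alphaTilde, g, D]
    simp only [Matrix.cons_val_zero, Matrix.cons_val_one, Matrix.cons_val]
    rw [Real.sq_sqrt (by positivity)]
    congr 3
    simp [Real.sqrt_sq_eq_abs]
  have hy4 : IntegrableOn (fun w : ℝ => (w + u)⁻¹) (Set.Ioc (-u) (-u + 1/2)) := by
    obtain ⟨w₀, -, hw₀⟩ := isCompact_Icc.exists_isMinOn
      (Set.nonempty_Icc.2 (by linarith : (-u) ≤ -u + 1/2)) hgc.continuousOn
    refine Integrable.mono' (g := fun w => (g w₀)⁻¹ * (g w * (χ |w + u|)⁻¹))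
      ((hy3.const_mul (g w₀)⁻¹).integrableOn) ?_ ?_
    · exact (measurable_id.add_const u).inv.aestronglyMeasurable
    · rw [ae_restrict_iff' measurableSet_Ioc]
      refine Filter.Eventually.of_forall fun w hw => ?_
      have hp : 0 < w + u := by linarith [hw.1]
      have hle : w + u ≤ 1/2 := by linarith [hw.2]
      rw [abs_of_pos hp, hid _ hp.le hle, Real.norm_of_nonneg (by positivity), ← mul_assoc]
      have : g w₀ ≤ g w := hw₀ ⟨hw.1.le, hw.2⟩
      have h3 : 1 ≤ (g w₀)⁻¹ * g w := by
        rw [inv_mul_eq_div, one_le_div (hgpos _)]; exact this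
      exact le_mul_of_one_le_left (by positivity) h3
  rw [← intervalIntegrable_iff_integrableOn_Ioc_of_le (by linarith)] at hy4
  have h5 := (intervalIntegrable_sub_inv_iff (a := -u) (b := -u + 1/2) (c := -u)).1
    (by simpa [sub_neg_eq_add] using hy4)
  rcases h5 with h | h
  · linarith
  · exact h Set.left_mem_uIcc

lemma y_bound {t x a s M : ℝ} (ht : 1 ≤ t) (hx : 0 ≤ x) (hxa : 0 ≤ x - t * a)
    (hM : M = max x |a|) (hMp : 0 < M) (hs0 : 0 < s) (hst : s < t) :
    0 < x - a * (t - s) ∧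
      qf (x - a * (t - s)) ≤ Real.sqrt t * qf M * (qf s + qf (t - s)) := by
  have htp : 0 < t := by linarith
  have key : ∀ r, 0 < r → M * r ≤ t * (x - a * (t - s)) → 0 < x - a * (t - s) ∧
      qf (x - a * (t - s)) ≤ Real.sqrt t * qf M * qf r := by
    intro r hr h
    have h1 : 0 < M * r := by positivity
    have hy : 0 < x - a * (t - s) := by
      by_contra hc
      have := mul_nonpos_of_nonneg_of_nonpos htp.le (not_lt.1 hc)
      linarith
    refine ⟨hy, ?_⟩
    have h2 : qf (t * (x - a * (t - s))) ≤ qf (M * r) := by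
      unfold qf
      rw [abs_of_pos h1, abs_of_pos (h1.trans_le h)]
      exact inv_anti₀ (Real.sqrt_pos.2 h1) (Real.sqrt_le_sqrt h)
    rw [qf_mul, qf_mul] at h2
    have h3 : Real.sqrt t * qf t = 1 := by
      unfold qf; rw [abs_of_pos htp]; exact mul_inv_cancel₀ (Real.sqrt_pos.2 htp).ne'
    calc qf (x - a * (t - s)) = Real.sqrt t * (qf t * qf (x - a * (t - s))) := by
          rw [← mul_assoc, h3, one_mul]
      _ ≤ Real.sqrt t * (qf M * qf r) := by gcongr
      _ = _ := by ring
  have p1 : 0 ≤ Real.sqrt t * qf M * qf s := mul_nonneg (mul_nonneg (Real.sqrt_nonneg _) (qf_nonneg _)) (qf_nonneg _)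
  have p2 : 0 ≤ Real.sqrt t * qf M * qf (t - s) := mul_nonneg (mul_nonneg (Real.sqrt_nonneg _) (qf_nonneg _)) (qf_nonneg _)
  rcases le_or_gt a 0 with ha | ha
  · have h : M * (t - s) ≤ t * (x - a * (t - s)) := by
      rw [abs_of_nonpos ha] at hM
      have hr : 0 < t - s := by linarith
      rcases max_cases x (-a) with ⟨e, _⟩ | ⟨e, _⟩
      · rw [hM, e]
        have := mul_nonneg (mul_nonneg htp.le (neg_nonneg.2 ha)) hr.le
        nlinarith [mul_nonneg hx hs0.le]
      · rw [hM, e]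
        have := mul_nonneg (mul_nonneg (sub_nonneg.2 ht) (neg_nonneg.2 ha)) hr.le
        nlinarith [mul_nonneg htp.le hx]
    obtain ⟨k1, k2⟩ := key _ (by linarith) h
    exact ⟨k1, by rw [mul_add]; linarith⟩
  · have hax : a ≤ x := by nlinarith
    have h : M * s ≤ t * (x - a * (t - s)) := by
      rw [hM, abs_of_pos ha, max_eq_left hax]
      nlinarith [mul_nonneg hxa (by linarith : 0 ≤ t - s)]
    obtain ⟨k1, k2⟩ := key _ hs0 h
    exact ⟨k1, by rw [mul_add]; linarith⟩

lemma chi_qf {χ : ℝ → ℝ} (h1 : ∀ s ≥ 0, χ s ≤ 1) (h2 : ∀ s ≥ 0, χ s ≤ 2 * s)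
    (hp : ∀ s > 0, 0 < χ s) {u k' ν₀ x M : ℝ} (ξ : EuclideanSpace ℝ (Fin 3)) (hx : 0 ≤ x)
    (hk : 0 < k' * ν₀) (hM : M = max x |ξ 0 + u|) (hMp : 0 < M) :
    0 < χ (alphaTilde u k' ν₀ x ξ) ∧
    qf M ≤ Real.sqrt (2 * (1 + k' * ν₀)) / χ (alphaTilde u k' ν₀ x ξ) := by
  set a := ξ 0 + u with ha
  set k := k' * ν₀ with hkd
  have hxM : x ≤ M := hM ▸ le_max_left _ _
  have haM : |a| ≤ M := hM ▸ le_max_right _ _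
  have hpos : 0 < alphaTilde u k' ν₀ x ξ := by
    unfold alphaTilde
    rw [← ha, ← hkd]
    apply Real.sqrt_pos.2
    rcases max_cases x |a| with ⟨e, _⟩ | ⟨e, _⟩
    · have : 0 < x := by rw [← e, ← hM]; exact hMp
      positivity
    · have : 0 < |a| := by rw [← e, ← hM]; exact hMp
      have : a ≠ 0 := abs_pos.1 this
      positivity
  have hle : alphaTilde u k' ν₀ x ξ ≤ (1 + k) * M := by
    unfold alphaTilde
    rw [← ha, ← hkd]
    apply Real.sqrt_le_iff.2
    refine ⟨by positivity, ?_⟩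
    have h3 : a ^ 2 ≤ M ^ 2 := by rw [← sq_abs]; gcongr
    have h4 : k^2 * x^2 ≤ k^2 * M^2 := by gcongr
    nlinarith [mul_nonneg hk.le (sq_nonneg M)]
  have hc := hp _ hpos
  refine ⟨hc, ?_⟩
  set α := χ (alphaTilde u k' ν₀ x ξ) with hα
  have h5 : α ≤ 1 := h1 _ hpos.le
  have h6 : α ≤ 2 * (1 + k) * M := by
    have := h2 _ hpos.le
    rw [← hα] at this
    linarith
  have h7 : α ≤ Real.sqrt (2 * (1 + k)) * Real.sqrt M := by
    rw [← Real.sqrt_mul (by positivity)]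
    apply Real.le_sqrt_of_sq_le
    nlinarith
  unfold qf
  rw [abs_of_pos hMp, le_div_iff₀ hc, inv_mul_le_iff₀ (Real.sqrt_pos.2 hMp)]
  linarith

lemma gauss_integrable {θ : ℝ} (hθ : 0 < θ) :
    Integrable (fun ξ : EuclideanSpace ℝ (Fin 3) => Real.exp (-θ * ‖ξ‖ ^ 2)) := by
  by_contra h
  have h1 := integral_undef h
  rw [GaussianFourier.integral_rexp_neg_mul_sq_norm hθ] at h1
  have : 0 < (Real.pi / θ) ^ ((Module.finrank ℝ (EuclideanSpace ℝ (Fin 3)) : ℝ) / 2) := by positivity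
  exact this.ne' h1

/-- second part of Lemma NLN-inner, with `c = 1/8`:
for every `C > 0` and `θ ∈ (0,1/4)` there are `C' > 0` and `t₀ ≥ 1` such that
for all `t ≥ t₀`, `x ≥ 0` and `ξ` with `x − t(ξ₁+u) ≥ 0`,
`∫₀^t e^{−ν(ξ)(t−s)} ∫ e^{−θ|ξ'|²} ∫ e^{−C|ξ'−ξ''|²}/|ξ'−ξ''| ·
    α(x−(ξ₁+u)(t−s),ξ'')⁻¹ dξ'' dξ' ds ≤ C' t / α(x,ξ)`. -/
theorem nln_inner_two (ν₀ u : ℝ) (hν₀ : 0 < ν₀) (hu : |u| ≤ 1/2)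
    (χ χ' : ℝ → ℝ)
    (hderiv : ∀ s ≥ (0:ℝ), HasDerivAt χ (χ' s) s)
    (hcont : ContinuousOn χ' (Set.Ici (0:ℝ)))
    (hmono : ∀ s ≥ (0:ℝ), 0 ≤ χ' s)
    (hid : ∀ s : ℝ, 0 ≤ s → s ≤ 1/2 → χ s = s)
    (hone : ∀ s : ℝ, 2 ≤ s → χ s = 1)
    (hbound : ∀ s ≥ (0:ℝ), |χ' s| ≤ 1)
    (ν : EuclideanSpace ℝ (Fin 3) → ℝ) (hνmeas : Measurable ν)
    (hνlb : ∀ ξ, ν₀ * (1 + ‖ξ‖) ≤ ν ξ) :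
    ∀ C > (0:ℝ), ∀ θ : ℝ, 0 < θ → θ < 1/4 →
      ∃ C' > (0:ℝ), ∃ t₀ ≥ (1:ℝ), ∀ t ≥ t₀,
        ∀ x ≥ (0:ℝ), ∀ ξ : EuclideanSpace ℝ (Fin 3), 0 ≤ x - t * (ξ 0 + u) →
          (∫ s in Set.Icc (0:ℝ) t, Real.exp (-ν ξ * (t - s)) *
              ∫ ξ' : EuclideanSpace ℝ (Fin 3), Real.exp (-θ * ‖ξ'‖ ^ 2) *
                ∫ ξ'' : EuclideanSpace ℝ (Fin 3),
                  Real.exp (-C * ‖ξ' - ξ''‖ ^ 2) / ‖ξ' - ξ''‖ *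
                    (χ (alphaTilde u (1/8) ν₀ (x - (ξ 0 + u) * (t - s)) ξ''))⁻¹) ≤
            C' * t / χ (alphaTilde u (1/8) ν₀ x ξ) := by
  obtain ⟨c0, cp, c1, c2, ci⟩ := chi_facts χ χ' hderiv hmono hid hone
  intro C hC θ hθ _
  set H := (∫ w, hh w) + ∫ w, gg C w with hHd
  have hH0 : 0 ≤ H := add_nonneg (integral_nonneg hh_nonneg) (integral_nonneg (gg_nonneg C))
  set Θ := ∫ ξ : EuclideanSpace ℝ (Fin 3), Real.exp (-θ * ‖ξ‖ ^ 2) with hΘ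
  have hΘ0 : 0 ≤ Θ := integral_nonneg fun ξ => (Real.exp_pos _).le
  have hk : 0 < 1/8 * ν₀ := by positivity
  set k := 1/8 * ν₀ with hkd
  set K := 2 * H ^ 3 * Θ with hK
  have hK0 : 0 ≤ K := by positivity
  have at0 : ∀ y ξ, 0 ≤ alphaTilde u (1/8) ν₀ y ξ := fun y ξ => Real.sqrt_nonneg _
  have hqk := qf_nonneg k
  refine ⟨K * (1 + 4 * qf k * Real.sqrt (2 * (1 + k))) + 1, by positivity, 1, le_rfl, ?_⟩
  intro t ht x hx ξ hxa
  have hνpos : 0 ≤ ν ξ := le_trans (by positivity) (hνlb ξ)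
  -- bound for the two inner integrals
  have hI : ∀ y > 0, ∫ ξ' : EuclideanSpace ℝ (Fin 3), Real.exp (-θ * ‖ξ'‖ ^ 2) *
      ∫ ξ'' : EuclideanSpace ℝ (Fin 3), Real.exp (-C * ‖ξ' - ξ''‖ ^ 2) / ‖ξ' - ξ''‖ *
        (χ (alphaTilde u (1/8) ν₀ y ξ''))⁻¹ ≤ K * (1 + qf k * qf y) := by
    intro y hy
    calc _ ≤ ∫ ξ' : EuclideanSpace ℝ (Fin 3), Real.exp (-θ * ‖ξ'‖ ^ 2) *
          (2 * H ^ 3 * (1 + qf k * qf y)) := by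
          refine integral_mono_of_nonneg ?_ ((gauss_integrable hθ).mul_const _) ?_
          · refine Filter.Eventually.of_forall fun ξ' => ?_
            exact mul_nonneg (Real.exp_pos _).le (integral_nonneg fun ξ'' =>
              mul_nonneg (by positivity) (inv_nonneg.2 (c0 _ (at0 _ _))))
          · refine Filter.Eventually.of_forall fun ξ' => ?_
            refine mul_le_mul_of_nonneg_left ?_ (Real.exp_pos _).le
            refine J_bound hC u (qf k * qf y) (mul_nonneg hqk (qf_nonneg y)) ξ' _
              (fun ξ'' => inv_nonneg.2 (c0 _ (at0 _ _))) ?_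
            intro ξ'' hne
            obtain ⟨b1, b2⟩ := alpha_bound u (1/8) ν₀ y ξ'' hk hy hne
            have := ci _ b1
            rw [← hkd, qf_mul] at b2
            linarith
      _ = _ := by rw [integral_mul_const]; simp only [hK]; ring
  set a := ξ 0 + u with had
  set M := max x |a| with hM
  have hM0 : 0 ≤ M := hx.trans (le_max_left _ _)
  rcases hM0.eq_or_lt with hMz | hMp
  · -- degenerate case
    have hx0 : x = 0 := le_antisymm (hMz ▸ le_max_left _ _) hx
    have ha0 : a = 0 := abs_nonpos_iff.1 (hMz ▸ le_max_right _ _)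
    have hz : ∀ ξ' : EuclideanSpace ℝ (Fin 3), ∫ ξ'' : EuclideanSpace ℝ (Fin 3),
        Real.exp (-C * ‖ξ' - ξ''‖ ^ 2) / ‖ξ' - ξ''‖ * (χ (alphaTilde u (1/8) ν₀ 0 ξ''))⁻¹ = 0 :=
      fun ξ' => integral_undef (not_integrable_inner C u (1/8) ν₀ χ hid ξ')
    simp only [hx0, ha0, zero_mul, sub_zero, hz, mul_zero, integral_zero]
    exact div_nonneg (mul_nonneg (by positivity) (by linarith)) (c0 _ (at0 _ _))
  obtain ⟨hαp, hαq⟩ := chi_qf c1 c2 cp (u := u) (k' := 1/8) (ν₀ := ν₀) ξ hx hk hM hMp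
  have hα1 := c1 _ (at0 x ξ)
  rw [← hkd] at hαq
  set α := χ (alphaTilde u (1/8) ν₀ x ξ) with hα
  have htp : 0 < t := by linarith
  have i1 : IntervalIntegrable qf volume 0 t := qf_intervalIntegrable t htp.le
  have i2 : IntervalIntegrable (fun s => qf (t - s)) volume 0 t := by
    have := (i1.comp_sub_left t).symm
    simpa using this
  have e1 := qf_integral t htp.le
  have e2 : ∫ s in (0:ℝ)..t, qf (t - s) = 2 * Real.sqrt t := by
    rw [intervalIntegral.integral_comp_sub_left]; simpa using e1
  have i3 : IntervalIntegrable (fun s => K * (1 + qf k * (Real.sqrt t * qf M * (qf s + qf (t - s)))))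
      volume 0 t :=
    ((intervalIntegrable_const (c := (1:ℝ))).add (((i1.add i2).const_mul _).const_mul _)).const_mul _
  have e3 : ∫ s in (0:ℝ)..t, K * (1 + qf k * (Real.sqrt t * qf M * (qf s + qf (t - s)))) =
      K * t * (1 + 4 * qf k * qf M) := by
    have i4 : IntervalIntegrable (fun s => qf k * (Real.sqrt t * qf M * (qf s + qf (t - s))))
      volume 0 t := ((i1.add i2).const_mul _).const_mul _
    rw [intervalIntegral.integral_const_mul,
      intervalIntegral.integral_add intervalIntegrable_const i4,
      intervalIntegral.integral_const_mul, intervalIntegral.integral_const_mul,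
      intervalIntegral.integral_add i1 i2, e1, e2]
    have := Real.mul_self_sqrt htp.le
    simp only [intervalIntegral.integral_const, sub_zero, smul_eq_mul, mul_one]
    linear_combination (4 * K * qf k * qf M) * this
  have step : (∫ s in Set.Icc (0:ℝ) t, Real.exp (-ν ξ * (t - s)) *
              ∫ ξ' : EuclideanSpace ℝ (Fin 3), Real.exp (-θ * ‖ξ'‖ ^ 2) *
                ∫ ξ'' : EuclideanSpace ℝ (Fin 3),
                  Real.exp (-C * ‖ξ' - ξ''‖ ^ 2) / ‖ξ' - ξ''‖ *
                    (χ (alphaTilde u (1/8) ν₀ (x - a * (t - s)) ξ''))⁻¹) ≤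
      K * t * (1 + 4 * qf k * qf M) := by
    rw [← e3, intervalIntegral.integral_of_le htp.le, integral_Icc_eq_integral_Ioo,
      integral_Ioc_eq_integral_Ioo]
    refine integral_mono_of_nonneg ?_ ?_ ?_
    · refine Filter.Eventually.of_forall fun s => ?_
      exact mul_nonneg (Real.exp_pos _).le (integral_nonneg fun ξ' =>
        mul_nonneg (Real.exp_pos _).le (integral_nonneg fun ξ'' =>
              mul_nonneg (by positivity) (inv_nonneg.2 (c0 _ (at0 _ _)))))
    · exact ((intervalIntegrable_iff_integrableOn_Ioo_of_le htp.le).1 i3)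
    · refine (ae_restrict_iff' measurableSet_Ioo).2 (Filter.Eventually.of_forall fun s hs => ?_)
      obtain ⟨y1, y2⟩ := y_bound ht hx hxa hM hMp hs.1 hs.2
      have hI' := hI _ y1
      have hex : Real.exp (-ν ξ * (t - s)) ≤ 1 := by
        rw [Real.exp_le_one_iff]
        nlinarith [mul_nonneg hνpos (sub_nonneg.2 hs.2.le)]
      have hq : K * (1 + qf k * qf (x - a * (t - s))) ≤
          K * (1 + qf k * (Real.sqrt t * qf M * (qf s + qf (t - s)))) := by gcongr
      have hn : 0 ≤ K * (1 + qf k * qf (x - a * (t - s))) := by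
        have := qf_nonneg (x - a * (t - s))
        positivity
      calc _ ≤ Real.exp (-ν ξ * (t - s)) * (K * (1 + qf k * qf (x - a * (t - s)))) :=
            mul_le_mul_of_nonneg_left hI' (Real.exp_pos _).le
        _ ≤ 1 * (K * (1 + qf k * qf (x - a * (t - s)))) :=
            mul_le_mul_of_nonneg_right hex hn
        _ ≤ _ := by rw [one_mul]; exact hq
  refine step.trans ?_
  have hone' : 1 ≤ 1 / α := by rw [le_div_iff₀ hαp]; linarith
  calc K * t * (1 + 4 * qf k * qf M)
      ≤ K * t * (1 / α + 4 * qf k * (Real.sqrt (2 * (1 + k)) / α)) := by gcongr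
    _ = (K * (1 + 4 * qf k * Real.sqrt (2 * (1 + k)))) * t / α := by ring
    _ ≤ _ := by gcongr; linarith
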